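/- Let n ≥ 2, p ∈ {1, …, n−1}, ω > 0, σ > 0, and let A ∈ 𝒮_n(ℝ) be positive definite with det(A) ≥ ω and σ_p(A) ≤ σ. Then there exist two positive numbers a₁ ≤ a₂ depending only on n, p, ω and σ such that, setting D = diag(a₁, a₂, …, a₂) ∈ 𝒮_n(ℝ): det(D) = ω, σ_p(D) = σ, A ≥ a₁ Id and D ≥ a₁ Id (in the sense of quadratic forms). -/

import Mathlib

/-!
Write `e_p` for the elementary symmetric functions, `m = n - 1`, and put
`f t = C(m,p) t^p + C(m,p-1) (ω / t^m) t^(p-1)`, which is `σ_p(diag(a₁, t, …, t))` when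
`a₁ = ω / t^m`, i.e. when the determinant is `ω`.

The inequality carrying the proof is `choose_mul_pow_le_esum`: if `r` positive numbers have product
`g^r`, then `e_p ≥ C(r,p) g^p`. Applied to all the eigenvalues of `A`, it yields `f t₀ ≤ σ` at
`t₀ = ω^(1/n)`. Since `f t ≥ t^p` for all `t > 0`, there is a *largest* `a₂ ≥ t₀` with
`f a₂ ≤ σ`, and `f a₂ = σ` by the intermediate value theorem (`exists_last_solution`). Set
`a₁ = ω / a₂^m`; then `a₁ ≤ a₂` because `a₂^n ≥ ω`.

If some admissible matrix had an eigenvalue `μ < a₁`, let `g` be the geometric mean of the `m` other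
eigenvalues. Then `μ g^m ≥ ω` forces `g > a₂`, while the inequality applied to the other eigenvalues
gives `f g ≤ C(m,p) g^p + μ C(m,p-1) g^(p-1) ≤ σ`, contradicting the maximality of `a₂`.
Choosing the largest solution makes it unnecessary to know that `f` is monotone.
-/

noncomputable section

/-- `σ_p(A)`: the `p`-th elementary symmetric function of the eigenvalues of the
symmetric matrix `A`, read off from its characteristic polynomial via
`det(X·1 + A) = Σ_p σ_p(A) X^{n-p}`, i.e. `σ_p(A) = (−1)^p coeff_{n−p}(charpoly A)`. -/
def sigmaP (n p : ℕ) (A : Matrix (Fin n) (Fin n) ℝ) : ℝ :=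
  (-1 : ℝ) ^ p * A.charpoly.coeff (n - p)

/-- The diagonal matrix `diag(a₁, a₂, …, a₂)`. -/
def diagD (n : ℕ) (a₁ a₂ : ℝ) : Matrix (Fin n) (Fin n) ℝ :=
  Matrix.diagonal (fun i => if (i : ℕ) = 0 then a₁ else a₂)

open Finset

/-- The `p`-th elementary symmetric function of the family `f` restricted to `s`. -/
def esum {ι : Type*} (s : Finset ι) (p : ℕ) (f : ι → ℝ) : ℝ :=
  ∑ t ∈ s.powersetCard p, ∏ i ∈ t, f i

lemma esum_insert {ι : Type*} [DecidableEq ι] {a : ι} {s : Finset ι} (ha : a ∉ s) (p : ℕ)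
    (f : ι → ℝ) : esum (insert a s) (p + 1) f = esum s (p + 1) f + f a * esum s p f := by
  have hmem : ∀ t ∈ s.powersetCard p, a ∉ t := fun t ht h =>
    ha ((mem_powersetCard.1 ht).1 h)
  unfold esum
  rw [powersetCard_succ_insert ha, sum_union, sum_image, mul_sum]
  · congr 1
    exact sum_congr rfl fun t ht => prod_insert (hmem t ht)
  · intro t ht u hu h
    rw [← erase_insert (hmem t ht), ← erase_insert (hmem u hu)]
    exact congrArg (fun v => v.erase a) h
  · rw [disjoint_left]
    intro t ht ht'
    obtain ⟨u, -, rfl⟩ := mem_image.1 ht'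
    exact ha ((mem_powersetCard.1 ht).1 (mem_insert_self a u))

lemma esum_const {ι : Type*} (s : Finset ι) (p : ℕ) (f : ι → ℝ) (c : ℝ) (h : ∀ i ∈ s, f i = c) :
    esum s p f = (#s).choose p * c ^ p := by
  unfold esum
  have : ∀ t ∈ s.powersetCard p, ∏ i ∈ t, f i = c ^ p := by
    intro t ht
    obtain ⟨h1, h2⟩ := mem_powersetCard.1 ht
    rw [prod_congr rfl fun i hi => h i (h1 hi), prod_const, h2]
  rw [sum_congr rfl this]
  simp

/-- Every index lies in the same number of `p`-subsets, so a family of sum zero also has zero total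
over all `p`-subsets. -/
lemma sum_powersetCard_sum_eq_zero {ι : Type*} [DecidableEq ι] (s : Finset ι) (p : ℕ) (x : ι → ℝ)
    (hx : ∑ i ∈ s, x i = 0) : ∑ t ∈ s.powersetCard p, ∑ i ∈ t, x i = 0 := by
  rcases Nat.eq_zero_or_pos p with rfl | hp
  · simp
  rw [sum_comm' (t' := s) (s' := fun i => (s.powersetCard p).filter ({i} ⊆ ·))]
  · have : ∀ i ∈ s, ∑ _t ∈ (s.powersetCard p).filter ({i} ⊆ ·), x i
        = ((#s - 1).choose (p - 1) : ℝ) * x i := by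
      intro i hi
      rw [sum_const, card_filter_powersetCard_subset _ _ _ (by simpa using hi) (by rw [card_singleton]; exact hp)]
      simp
    rw [sum_congr rfl this, ← mul_sum, hx, mul_zero]
  · intro t i
    simp only [mem_filter, singleton_subset_iff]
    constructor
    · rintro ⟨h1, h2⟩
      exact ⟨⟨h1, h2⟩, (mem_powersetCard.1 h1).1 h2⟩
    · rintro ⟨h1, -⟩
      exact h1

/-- The comparison of `e_p` with the geometric mean `g`. After dividing by `g`, it follows by summing
`1 + log z ≤ z` over the products `z` of the `p`-subsets, the logarithms adding up to zero. -/
lemma choose_mul_pow_le_esum {ι : Type*} [DecidableEq ι] (s : Finset ι) (p : ℕ) (f : ι → ℝ)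
    (hf : ∀ i ∈ s, 0 < f i) (g : ℝ) (hg : 0 < g) (hprod : ∏ i ∈ s, f i = g ^ #s) :
    (#s).choose p * g ^ p ≤ esum s p f := by
  have hlog : ∑ i ∈ s, Real.log (f i / g) = 0 := by
    rw [← Real.log_prod (fun i hi => (div_pos (hf i hi) hg).ne'), prod_div_distrib, hprod,
      prod_const, div_self (pow_pos hg _).ne', Real.log_one]
  have hsum := sum_powersetCard_sum_eq_zero s p _ hlog
  have key : ∀ t ∈ s.powersetCard p,
      g ^ p + g ^ p * ∑ i ∈ t, Real.log (f i / g) ≤ ∏ i ∈ t, f i := by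
    intro t ht
    obtain ⟨h1, h2⟩ := mem_powersetCard.1 ht
    have hpos : ∀ i ∈ t, 0 < f i / g := fun i hi => div_pos (hf i (h1 hi)) hg
    rw [← Real.log_prod (fun i hi => (hpos i hi).ne')]
    have hl := Real.log_le_sub_one_of_pos (prod_pos hpos)
    have he : ∏ i ∈ t, f i = g ^ p * ∏ i ∈ t, f i / g := by
      rw [prod_div_distrib, prod_const, h2, mul_div_cancel₀ _ (pow_pos hg _).ne']
    rw [he]
    nlinarith [pow_pos hg p]
  have := sum_le_sum key
  rw [sum_add_distrib, ← mul_sum, hsum, sum_const, card_powersetCard, nsmul_eq_mul] at this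
  simpa [esum] using this

lemma coeff_prod_eq_esum (n p : ℕ) (hp : p ≤ n) (f : Fin n → ℝ) :
    (-1 : ℝ) ^ p * (∏ i, (Polynomial.X - Polynomial.C (f i))).coeff (n - p) = esum univ p f := by
  have h := Multiset.prod_X_sub_C_coeff (univ.val.map f) (k := n - p) (by simp)
  rw [Multiset.map_map, Finset.esymm_map_val] at h
  simp only [Multiset.card_map, card_val, card_univ, Fintype.card_fin, Nat.sub_sub_self hp] at h
  have h2 : (∏ i, (Polynomial.X - Polynomial.C (f i))).coeff (n - p)
      = (-1 : ℝ) ^ p * esum univ p f := h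
  rw [h2, ← mul_assoc, ← mul_pow]
  simp

lemma sigmaP_eq_esum (n p : ℕ) (hp : p ≤ n) (A : Matrix (Fin n) (Fin n) ℝ) (hA : A.IsHermitian) :
    sigmaP n p A = esum univ p hA.eigenvalues := by
  rw [sigmaP, hA.charpoly_eq]
  exact coeff_prod_eq_esum n p hp _

/-- `σ_{q+1}` of `diag(a₁, a₂, …, a₂)` in dimension `m + 1`. -/
lemma sigmaP_diagD (m q : ℕ) (hq : q ≤ m) (a₁ a₂ : ℝ) :
    sigmaP (m + 1) (q + 1) (diagD (m + 1) a₁ a₂)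
      = m.choose (q + 1) * a₂ ^ (q + 1) + a₁ * (m.choose q * a₂ ^ q) := by
  rw [sigmaP, diagD, Matrix.charpoly_diagonal, coeff_prod_eq_esum _ _ (by omega),
    ← insert_erase (mem_univ (0 : Fin (m + 1))), esum_insert (by simp),
    esum_const _ _ _ a₂, esum_const _ _ _ a₂]
  · simp
  all_goals
    intro i hi
    have : i ≠ 0 := ne_of_mem_erase hi
    simp [this]

lemma det_diagD (m : ℕ) (a₁ a₂ : ℝ) : (diagD (m + 1) a₁ a₂).det = a₁ * a₂ ^ m := by
  simp [diagD, Matrix.det_diagonal, Fin.prod_univ_succ]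

lemma posSemidef_sub_smul_one {n : ℕ} (A : Matrix (Fin n) (Fin n) ℝ) (hA : A.IsHermitian) (a : ℝ)
    (h : ∀ i, a ≤ hA.eigenvalues i) :
    (A - a • (1 : Matrix (Fin n) (Fin n) ℝ)).PosSemidef := by
  have h1 : A - a • (1 : Matrix (Fin n) (Fin n) ℝ) = Unitary.conjStarAlgAut ℝ _ hA.eigenvectorUnitary
      (Matrix.diagonal (fun i => hA.eigenvalues i - a)) := by
    have h2 : Matrix.diagonal (fun i => hA.eigenvalues i - a)
        = Matrix.diagonal (RCLike.ofReal ∘ hA.eigenvalues) - a • (1 : Matrix (Fin n) (Fin n) ℝ) := by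
      rw [← Matrix.diagonal_one, ← Matrix.diagonal_smul, Matrix.diagonal_sub]
      congr 1
      ext i
      simp
    rw [h2, map_sub, map_smul, map_one, ← hA.spectral_theorem]
  rw [h1, Unitary.conjStarAlgAut_apply]
  exact (Matrix.PosSemidef.diagonal fun i => sub_nonneg.2 (h i)).mul_mul_conjTranspose_same _

/-- A continuous function on `[t₀, ∞)` with a value at most `σ` at `t₀` and values exceeding `σ`
beyond `T` has a last point where it is at most `σ`, and it equals `σ` there. -/
lemma exists_last_solution (f : ℝ → ℝ) (t₀ σ T : ℝ) (hf : ContinuousOn f (Set.Ici t₀))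
    (h0 : f t₀ ≤ σ) (hT : ∀ t, t₀ ≤ t → T < t → σ < f t) :
    ∃ a, t₀ ≤ a ∧ f a = σ ∧ ∀ t, a < t → σ < f t := by
  have hcomp : IsCompact (Set.Icc t₀ (max t₀ T) ∩ f ⁻¹' Set.Iic σ) := by
    refine isCompact_Icc.of_isClosed_subset ?_ Set.inter_subset_left
    exact (hf.mono Set.Icc_subset_Ici_self).preimage_isClosed_of_isClosed isClosed_Icc isClosed_Iic
  obtain ⟨a, ⟨⟨ha0, -⟩, ha2⟩, hmax⟩ :=
    hcomp.exists_isGreatest ⟨t₀, ⟨le_refl _, le_max_left _ _⟩, h0⟩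
  have hlast : ∀ t, a < t → σ < f t := by
    intro t ht
    by_contra hle
    have htT : t ≤ T := by
      by_contra h
      exact hle (hT t (ha0.trans ht.le) (not_le.1 h))
    exact absurd (hmax ⟨⟨ha0.trans ht.le, htT.trans (le_max_right _ _)⟩, not_lt.1 hle⟩) (not_le.2 ht)
  refine ⟨a, ha0, ?_, hlast⟩
  obtain ⟨c, hc, hfc⟩ := intermediate_value_Icc (le_add_of_nonneg_right zero_le_one : a ≤ a + 1)
    (hf.mono fun x hx => ha0.trans hx.1) ⟨ha2, (hlast (a + 1) (by linarith)).le⟩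
  rcases hc.1.eq_or_lt with h | h
  · rw [h, hfc]
  · exact absurd hfc (hlast c h).ne'

/-- In dimension `m + 1` with `p = q + 1`: the eigenvalue bound satisfied by every admissible matrix,
where `a₂` is a point beyond which `σ_p(diag(ω / t^m, t, …, t))` exceeds `σ`. -/
lemma le_eigenvalues (m q : ℕ) (hq : q + 1 ≤ m) (ω σ a₂ : ℝ) (ha₂ : 0 < a₂)
    (hlast : ∀ t, a₂ < t →
      σ < m.choose (q + 1) * t ^ (q + 1) + ω / t ^ m * (m.choose q * t ^ q))
    (A : Matrix (Fin (m + 1)) (Fin (m + 1)) ℝ) (hA : A.PosDef) (hdet : ω ≤ A.det)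
    (hsig : sigmaP (m + 1) (q + 1) A ≤ σ) (i : Fin (m + 1)) :
    ω / a₂ ^ m ≤ hA.1.eigenvalues i := by
  by_contra! hlt
  have hm : m ≠ 0 := by omega
  set l := hA.1.eigenvalues with hl
  have hpos : ∀ j, 0 < l j := hA.eigenvalues_pos
  have hprodpos : 0 < ∏ j ∈ univ.erase i, l j := prod_pos fun j _ => hpos j
  set g := (∏ j ∈ univ.erase i, l j) ^ (1 / m : ℝ) with hgdef
  have hg : 0 < g := Real.rpow_pos_of_pos hprodpos _
  have hgm : ∏ j ∈ univ.erase i, l j = g ^ m := by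
    rw [hgdef, one_div, Real.rpow_inv_natCast_pow hprodpos.le hm]
  have hcard : #(univ.erase i) = m := by simp
  have hd : ω ≤ l i * g ^ m := by
    rw [← hgm, mul_prod_erase univ l (mem_univ i)]
    simpa [hA.1.det_eq_prod_eigenvalues] using hdet
  have hgm0 := pow_pos hg m
  have ham0 := pow_pos ha₂ m
  have hag : a₂ < g := by
    refine lt_of_pow_lt_pow_left₀ m hg.le ?_
    rw [lt_div_iff₀ ham0] at hlt
    exact lt_of_mul_lt_mul_left (hlt.trans_le hd) (hpos i).le
  have h1 := choose_mul_pow_le_esum (univ.erase i) (q + 1) l (fun j _ => hpos j) g hg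
    (by rw [hcard, hgm])
  have h2 := choose_mul_pow_le_esum (univ.erase i) q l (fun j _ => hpos j) g hg
    (by rw [hcard, hgm])
  rw [hcard] at h1 h2
  rw [sigmaP_eq_esum _ _ (by omega) A hA.1, ← hl, ← insert_erase (mem_univ i),
    esum_insert (by simp)] at hsig
  have h3 : ω / g ^ m ≤ l i := by rwa [div_le_iff₀ hgm0]
  have h4 : ω / g ^ m * (m.choose q * g ^ q) ≤ l i * esum (univ.erase i) q l :=
    mul_le_mul h3 h2 (by positivity) (hpos i).le
  linarith [hlast g hag]

/-- **Lemma (algebra).** Let `n ≥ 2`, `p ∈ {1,…,n−1}`, `ω, σ > 0`, and let `A` be a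
positive definite symmetric matrix with `det A ≥ ω` and `σ_p(A) ≤ σ`. Then there are
`0 < a₁ ≤ a₂`, depending only on `n`, `p`, `ω`, `σ` (they serve simultaneously for all
such `A`), such that `D = diag(a₁,a₂,…,a₂)` satisfies `det D = ω`, `σ_p(D) = σ`,
`A ≥ a₁·1` and `D ≥ a₁·1` in the sense of quadratic forms. -/
theorem algebra_lemma (n : ℕ) (hn : 2 ≤ n) (p : ℕ) (hp1 : 1 ≤ p) (hp2 : p ≤ n - 1)
    (ω σ : ℝ) (hω : 0 < ω) (hσ : 0 < σ)
    (A : Matrix (Fin n) (Fin n) ℝ) (hA : A.PosDef)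
    (hdet : ω ≤ A.det) (hsig : sigmaP n p A ≤ σ) :
    ∃ a₁ a₂ : ℝ, 0 < a₁ ∧ a₁ ≤ a₂ ∧
      (diagD n a₁ a₂).det = ω ∧
      sigmaP n p (diagD n a₁ a₂) = σ ∧
      (A - a₁ • (1 : Matrix (Fin n) (Fin n) ℝ)).PosSemidef ∧
      (diagD n a₁ a₂ - a₁ • (1 : Matrix (Fin n) (Fin n) ℝ)).PosSemidef ∧
      -- `a₁`, `a₂` depend only on `n`, `p`, `ω`, `σ`:
      ∀ A' : Matrix (Fin n) (Fin n) ℝ, A'.PosDef → ω ≤ A'.det → sigmaP n p A' ≤ σ →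
        (A' - a₁ • (1 : Matrix (Fin n) (Fin n) ℝ)).PosSemidef := by
  obtain ⟨m, rfl⟩ : ∃ m, n = m + 1 := ⟨n - 1, by omega⟩
  obtain ⟨q, rfl⟩ : ∃ q, p = q + 1 := ⟨p - 1, by omega⟩
  have hq : q + 1 ≤ m := by omega
  set t₀ : ℝ := ω ^ (1 / (m + 1 : ℕ) : ℝ) with ht₀
  have ht₀pos : 0 < t₀ := Real.rpow_pos_of_pos hω _
  have ht₀pow : t₀ ^ (m + 1) = ω := by
    rw [ht₀, one_div, Real.rpow_inv_natCast_pow hω.le (by omega)]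
  set f : ℝ → ℝ := fun t =>
    m.choose (q + 1) * t ^ (q + 1) + ω / t ^ m * (m.choose q * t ^ q) with hf
  have hcont : ContinuousOn f (Set.Ici t₀) := by
    have : ∀ t ∈ Set.Ici t₀, t ^ m ≠ 0 := fun t ht => (pow_pos (ht₀pos.trans_le ht) m).ne'
    fun_prop (disch := assumption)
  have hstart : f t₀ ≤ σ := by
    have hpos : 0 < A.det := hω.trans_le hdet
    set G : ℝ := A.det ^ (1 / (m + 1 : ℕ) : ℝ) with hG
    have hGpow : G ^ (m + 1) = A.det := by
      rw [hG, one_div, Real.rpow_inv_natCast_pow hpos.le (by omega)]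
    have hle : t₀ ≤ G := Real.rpow_le_rpow hω.le hdet (by positivity)
    have h := choose_mul_pow_le_esum univ (q + 1) hA.1.eigenvalues
      (fun j _ => hA.eigenvalues_pos j) G (ht₀pos.trans_le hle)
      (by
        rw [card_univ, Fintype.card_fin, hGpow]
        simp [hA.1.det_eq_prod_eigenvalues])
    rw [← sigmaP_eq_esum _ _ (by omega) A hA.1, card_univ, Fintype.card_fin] at h
    have hf₀ : f t₀ = (m + 1).choose (q + 1) * t₀ ^ (q + 1) := by
      have : ω / t₀ ^ m = t₀ := by
        rw [← ht₀pow, pow_succ, mul_div_cancel_left₀ _ (pow_pos ht₀pos m).ne']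
      simp only [hf, this, Nat.choose_succ_succ, Nat.succ_eq_add_one]
      push_cast
      ring
    rw [hf₀]
    refine le_trans ?_ (h.trans hsig)
    gcongr
  have hlarge : ∀ t, t₀ ≤ t → max 1 σ < t → σ < f t := by
    intro t ht hσt
    have htpos := ht₀pos.trans_le ht
    have h1 : 1 ≤ t := (le_max_left 1 σ).trans hσt.le
    have hc : (1 : ℝ) ≤ m.choose (q + 1) := by exact_mod_cast Nat.choose_pos hq
    calc σ ≤ max 1 σ := le_max_right _ _
      _ < t := hσt
      _ ≤ t ^ (q + 1) := le_self_pow₀ h1 (by omega)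
      _ ≤ m.choose (q + 1) * t ^ (q + 1) := le_mul_of_one_le_left (by positivity) hc
      _ ≤ f t := le_add_of_nonneg_right (by positivity)
  obtain ⟨a₂, ha₂, hfa, hlast⟩ := exists_last_solution f t₀ σ _ hcont hstart hlarge
  have ha₂pos : 0 < a₂ := ht₀pos.trans_le ha₂
  have ha₂m := pow_pos ha₂pos m
  have hle : ω / a₂ ^ m ≤ a₂ := by
    rw [div_le_iff₀ ha₂m, ← pow_succ', ← ht₀pow]
    gcongr
  have hmain : ∀ B : Matrix (Fin (m + 1)) (Fin (m + 1)) ℝ, B.PosDef → ω ≤ B.det →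
      sigmaP (m + 1) (q + 1) B ≤ σ →
      (B - (ω / a₂ ^ m) • (1 : Matrix (Fin (m + 1)) (Fin (m + 1)) ℝ)).PosSemidef :=
    fun B hB hBdet hBsig => posSemidef_sub_smul_one B hB.1 _
      (le_eigenvalues m q hq ω σ a₂ ha₂pos hlast B hB hBdet hBsig)
  refine ⟨ω / a₂ ^ m, a₂, by positivity, hle, ?_, ?_, hmain A hA hdet hsig, ?_, hmain⟩
  · rw [det_diagD, div_mul_cancel₀ _ ha₂m.ne']
  · rw [sigmaP_diagD m q (by omega), ← hfa]
  · rw [diagD, ← Matrix.diagonal_one, ← Matrix.diagonal_smul, Matrix.diagonal_sub]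
    refine Matrix.PosSemidef.diagonal fun i => ?_
    by_cases hi : (i : ℕ) = 0 <;> simp [hi, hle]
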